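/- arXiv:0709.0378 — 2 statements merged into one kernel-verified Lean document; each statement's English description precedes it below -/
import Mathlib

section
/- Consequently, the final density of the spiral model satisfies ρ_∞(ρ) ≥ μ^ρ(ℱ₀^{NE−SW}), where ℱ₀^{NE−SW} is the event that both the NE and SW occupied clusters of the origin are infinite; in particular, since μ^ρ(ℱ₀^{NE−SW}) ≥ θ_{OP}(ρ)² where θ_{OP}(ρ) is the oriented site percolation probability, the critical density ρ_c of the spiral model satisfies ρ_c ≤ p_c^{OP}. -/
open scoped Classical ENNReal

/-- A site of the two-dimensional lattice. -/
abbrev Site : Type := ℤ × ℤ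
/-- A configuration: `true` = occupied, `false` = empty. -/
abbrev Config : Type := Site → Bool

def e1 : Site := (1, 0)
def e2 : Site := (0, 1)

/-- Both sites `a` and `b` are empty in `η`. -/
def emptyPair (η : Config) (a b : Site) : Prop := η a = false ∧ η b = false

/-- The spiral model constraint `𝒜ₓ`: (both NE or both SW neighbours empty) and
(both NW or both SE neighbours empty). -/
def constraintA (η : Config) (x : Site) : Prop :=
  (emptyPair η (x + e2) (x + e1 + e2) ∨ emptyPair η (x - e2) (x - e1 - e2)) ∧
  (emptyPair η (x - e1) (x - e1 + e2) ∨ emptyPair η (x + e1) (x + e1 - e2))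

/-- The spiral model update operator: an occupied site is emptied iff the constraint holds;
empty sites stay empty. -/
noncomputable def T (η : Config) : Config := fun x =>
  if η x = true ∧ ¬ constraintA η x then true else false

/-- `μ` is the Bernoulli(ρ) product measure: every finite cylinder event has the product
probability. -/
def IsBernoulli (ρ : ℝ) (μ : MeasureTheory.Measure Config) : Prop :=
  ∀ (s : Finset Site) (f : Site → Bool),
    μ {η | ∀ x ∈ s, η x = f x} =
      ∏ x ∈ s, ENNReal.ofReal (if f x then ρ else 1 - ρ)

/-- One step of a North-East occupied path: `b ∈ {a+e₂, a+e₁+e₂}` and `b` occupied. -/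
def NEstep (η : Config) (a b : Site) : Prop :=
  (b = a + e2 ∨ b = a + e1 + e2) ∧ η b = true

/-- One step of a South-West occupied path. -/
def SWstep (η : Config) (a b : Site) : Prop :=
  (b = a - e2 ∨ b = a - e1 - e2) ∧ η b = true

/-- One step of an oriented-percolation occupied path: steps `e₁` or `e₂`. -/
def OPstep (η : Config) (a b : Site) : Prop :=
  (b = a + e1 ∨ b = a + e2) ∧ η b = true

/-- `y` is reachable from `x` by an occupied NE path (all sites occupied, including `x`). -/
def reachNE (η : Config) (x y : Site) : Prop :=
  η x = true ∧ Relation.ReflTransGen (NEstep η) x y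

def reachSW (η : Config) (x y : Site) : Prop :=
  η x = true ∧ Relation.ReflTransGen (SWstep η) x y

def reachOP (η : Config) (x y : Site) : Prop :=
  η x = true ∧ Relation.ReflTransGen (OPstep η) x y

/-- The NE occupied cluster of `x`. -/
def clusterNE (η : Config) (x : Site) : Set Site := {y | reachNE η x y}

def clusterSW (η : Config) (x : Site) : Set Site := {y | reachSW η x y}

def clusterOP (η : Config) (x : Site) : Set Site := {y | reachOP η x y}

open MeasureTheory ProbabilityTheory

/-- A generic occupied step with increments `u`, `v`. -/
def gstep (u v : Site) (η : Config) (a b : Site) : Prop :=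
  (b = a + u ∨ b = a + v) ∧ η b = true

/-- Reachability from the origin in exactly `n` generic steps. -/
def greach (u v : Site) (η : Config) : ℕ → Site → Prop
  | 0, y => y = 0
  | n + 1, y => ∃ z, greach u v η n z ∧ gstep u v η z y

/-- The set of sites reachable from the origin, whatever the state of the origin. -/
def gcl (u v : Site) (η : Config) : Set Site :=
  {y | Relation.ReflTransGen (gstep u v η) 0 y}

lemma gcl_iff (u v : Site) (η : Config) (y : Site) :
    Relation.ReflTransGen (gstep u v η) 0 y ↔ ∃ n, greach u v η n y := by
  constructor
  · intro h
    induction h with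
    | refl => exact ⟨0, rfl⟩
    | tail _ hs ih =>
      obtain ⟨n, hn⟩ := ih
      exact ⟨n + 1, _, hn, hs⟩
  · rintro ⟨n, hn⟩
    induction n generalizing y with
    | zero => rw [show y = 0 from hn]
    | succ n ih =>
      obtain ⟨z, hz, hs⟩ := hn
      exact (ih z hz).tail hs

lemma meas_greach (m : MeasurableSpace Config) (u v : Site) (S : Set Site)
    (h0 : u ∈ S ∧ v ∈ S) (hS : ∀ a ∈ S, a + u ∈ S ∧ a + v ∈ S)
    (hm : ∀ a ∈ S, MeasurableSet[m] {η : Config | η a = true}) (n : ℕ) (y : Site) :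
    MeasurableSet[m] {η | greach u v η n y} ∧ (∀ η, greach u v η n y → y = 0 ∨ y ∈ S) := by
  induction n generalizing y with
  | zero =>
    refine ⟨?_, fun η h => Or.inl h⟩
    simp only [greach]
    exact MeasurableSet.const _
  | succ n ih =>
    have key : ∀ η, greach u v η (n + 1) y → y ∈ S := by
      rintro η ⟨z, hz, hzy, -⟩
      rcases (ih z).2 η hz with rfl | hzS
      · rcases hzy with rfl | rfl
        · simpa using h0.1
        · simpa using h0.2
      · rcases hzy with rfl | rfl
        · exact (hS z hzS).1
        · exact (hS z hzS).2
    refine ⟨?_, fun η h => Or.inr (key η h)⟩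
    by_cases hy : y ∈ S
    · have : {η | greach u v η (n + 1) y} =
          ⋃ z : Site, ({η | greach u v η n z} ∩
            ({_η : Config | y = z + u ∨ y = z + v} ∩ {η : Config | η y = true})) := by
        ext η
        simp [greach, gstep]
      rw [this]
      exact MeasurableSet.iUnion fun z => (ih z).1.inter ((MeasurableSet.const _).inter (hm y hy))
    · have : {η | greach u v η (n + 1) y} = ∅ := by
        ext η
        simp only [Set.mem_ofPred_eq, Set.mem_empty_iff_false, iff_false]
        exact fun h => hy (key η h)
      rw [this]
      exact MeasurableSet.empty

lemma meas_gcl (m : MeasurableSpace Config) (u v : Site) (S : Set Site)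
    (h0 : u ∈ S ∧ v ∈ S) (hS : ∀ a ∈ S, a + u ∈ S ∧ a + v ∈ S)
    (hm : ∀ a ∈ S, MeasurableSet[m] {η : Config | η a = true}) :
    MeasurableSet[m] {η | (gcl u v η).Infinite} := by
  have : {η | (gcl u v η).Infinite} =
      ⋂ F : Finset Site, ⋃ y : Site, ⋃ n : ℕ,
        ({_η : Config | y ∉ F} ∩ {η | greach u v η n y}) := by
    ext η
    simp only [Set.mem_ofPred_eq, Set.mem_iInter, Set.mem_iUnion, Set.mem_inter_iff]
    constructor
    · intro h F
      obtain ⟨y, hy, hyF⟩ := h.exists_notMem_finset F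
      obtain ⟨n, hn⟩ := (gcl_iff u v η y).1 hy
      exact ⟨y, n, hyF, hn⟩
    · intro h hfin
      obtain ⟨y, n, hyF, hn⟩ := h hfin.toFinset
      apply hyF
      rw [Set.Finite.mem_toFinset]
      exact (gcl_iff u v η y).2 ⟨n, hn⟩
  rw [this]
  exact MeasurableSet.iInter fun F => MeasurableSet.iUnion fun y => MeasurableSet.iUnion fun n =>
    (MeasurableSet.const _).inter (meas_greach m u v S h0 hS hm n y).1

lemma meas_site (x : Site) : MeasurableSet {η : Config | η x = true} :=
  measurableSet_eq_fun (measurable_pi_apply x) measurable_const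

/-- Full event: origin occupied and generic cluster infinite. -/
def gev (u v : Site) : Set Config := {η | η 0 = true ∧ (gcl u v η).Infinite}

lemma meas_gev (u v : Site) : MeasurableSet (gev u v) :=
  (meas_site 0).inter (meas_gcl _ u v Set.univ (by simp) (by simp) fun a _ => meas_site a)

lemma infinite_and (p : Prop) (s : Set Site) :
    ({y | p ∧ y ∈ s} : Set Site).Infinite ↔ p ∧ s.Infinite := by
  by_cases hp : p <;> simp [hp]

lemma NE_eq : {η | (clusterNE η (0, 0)).Infinite} = gev e2 (e1 + e2) := by
  ext η
  have : NEstep η = gstep e2 (e1 + e2) η := by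
    funext a b
    simp [NEstep, gstep, add_assoc]
  have h : clusterNE η (0, 0) = {y | η 0 = true ∧ y ∈ gcl e2 (e1 + e2) η} := by
    ext y
    simp only [clusterNE, reachNE, this]
    rfl
  rw [Set.mem_ofPred_eq, h, infinite_and]
  rfl

lemma SW_eq : {η | (clusterSW η (0, 0)).Infinite} = gev (-e2) (-(e1 + e2)) := by
  ext η
  have : SWstep η = gstep (-e2) (-(e1 + e2)) η := by
    funext a b
    simp only [SWstep, gstep, sub_eq_add_neg, neg_add, add_assoc]
  have h : clusterSW η (0, 0) = {y | η 0 = true ∧ y ∈ gcl (-e2) (-(e1 + e2)) η} := by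
    ext y
    simp only [clusterSW, reachSW, this]
    rfl
  rw [Set.mem_ofPred_eq, h, infinite_and]
  rfl

lemma OP_eq : {η | (clusterOP η (0, 0)).Infinite} = gev e1 e2 := by
  ext η
  have : OPstep η = gstep e1 e2 η := rfl
  have h : clusterOP η (0, 0) = {y | η 0 = true ∧ y ∈ gcl e1 e2 η} := by
    ext y
    simp only [clusterOP, reachOP, this]
    rfl
  rw [Set.mem_ofPred_eq, h, infinite_and]
  rfl

/-! ### Uniqueness of the Bernoulli measure -/

lemma bern_unique {ρ : ℝ} {μ ν : Measure Config} [IsProbabilityMeasure μ]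
    [IsProbabilityMeasure ν] (hμ : IsBernoulli ρ μ) (hν : IsBernoulli ρ ν) : μ = ν := by
  refine ext_of_generate_finite
    {A | ∃ (s : Finset Site) (f : Site → Bool), A = {η : Config | ∀ x ∈ s, η x = f x}}
    ?_ ?_ ?_ (by simp)
  · apply le_antisymm
    · refine iSup_le fun x => ?_
      rintro _ ⟨t, -, rfl⟩
      have : (fun η : Config => η x) ⁻¹' t =
          ⋃ b : Bool, ({_η : Config | b ∈ t} ∩ {η : Config | ∀ y ∈ ({x} : Finset Site),
            η y = (fun _ => b) y}) := by
        ext η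
        simp
      change MeasurableSet[MeasurableSpace.generateFrom _] ((fun η : Config => η x) ⁻¹' t)
      rw [this]
      refine @MeasurableSet.iUnion _ _ (MeasurableSpace.generateFrom _) _ _ fun b =>
        @MeasurableSet.inter _ (MeasurableSpace.generateFrom _) _ _
          (@MeasurableSet.const _ (MeasurableSpace.generateFrom _) _) ?_
      exact MeasurableSpace.measurableSet_generateFrom ⟨{x}, fun _ => b, rfl⟩
    · refine MeasurableSpace.generateFrom_le ?_
      rintro _ ⟨s, f, rfl⟩
      have : {η : Config | ∀ x ∈ s, η x = f x} = ⋂ x ∈ s, (fun η : Config => η x) ⁻¹' {f x} := by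
        ext η
        simp
      rw [this]
      exact Finset.measurableSet_biInter s fun x _ =>
        (measurable_pi_apply x) (measurableSet_singleton _)
  · rintro _ ⟨s, f, rfl⟩ _ ⟨t, g, rfl⟩ ⟨ζ, hζ1, hζ2⟩
    refine ⟨s ∪ t, ζ, ?_⟩
    ext η
    simp only [Set.mem_inter_iff, Set.mem_ofPred_eq, Finset.mem_union] at *
    constructor
    · rintro ⟨h1, h2⟩ x (hx | hx)
      · rw [h1 x hx, hζ1 x hx]
      · rw [h2 x hx, hζ2 x hx]
    · intro h
      exact ⟨fun x hx => by rw [h x (Or.inl hx), hζ1 x hx],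
        fun x hx => by rw [h x (Or.inr hx), hζ2 x hx]⟩
  · rintro _ ⟨s, f, rfl⟩
    rw [hμ, hν]

/-! ### Coupling with uniform variables -/

/-- Threshold a uniform variable. -/
noncomputable def thr (ρ : ℝ) (u : unitInterval) : Bool := decide ((u : ℝ) ≤ ρ)

lemma meas_thr (ρ : ℝ) : Measurable (thr ρ) := by
  refine measurable_to_bool ?_
  have : thr ρ ⁻¹' {true} = {u : unitInterval | (u : ℝ) ≤ ρ} := by
    ext u
    simp [thr]
  rw [this]
  exact measurableSet_le measurable_subtype_coe measurable_const

/-- The common probability space of i.i.d. uniform variables. -/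
noncomputable def unif : Measure (Site → unitInterval) :=
  Measure.infinitePi (fun _ : Site => (volume : Measure unitInterval))

/-- One-site law. -/
noncomputable def ber (ρ : ℝ) : Measure Bool := (volume : Measure unitInterval).map (thr ρ)

instance ber_prob (ρ : ℝ) : IsProbabilityMeasure (ber ρ) :=
  Measure.isProbabilityMeasure_map (meas_thr ρ).aemeasurable

lemma ber_apply {ρ : ℝ} (hρ : ρ ∈ Set.Icc (0 : ℝ) 1) (b : Bool) :
    ber ρ {b} = ENNReal.ofReal (if b then ρ else 1 - ρ) := by
  rw [ber, Measure.map_apply (meas_thr ρ) (measurableSet_singleton _)]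
  cases b
  · have : thr ρ ⁻¹' {false} = Set.Ioi (⟨ρ, hρ⟩ : unitInterval) := by
      ext u
      simp [thr, ← Subtype.coe_lt_coe]
    rw [this, unitInterval.volume_Ioi]
    simp
  · have : thr ρ ⁻¹' {true} = Set.Iic (⟨ρ, hρ⟩ : unitInterval) := by
      ext u
      simp [thr, ← Subtype.coe_le_coe]
    rw [this, unitInterval.volume_Iic]
    simp

/-- The product measure. -/
noncomputable def prodBer (ρ : ℝ) : Measure Config := Measure.infinitePi (fun _ : Site => ber ρ)

instance prodBer_prob (ρ : ℝ) : IsProbabilityMeasure (prodBer ρ) := by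
  unfold prodBer
  infer_instance

lemma prodBer_bern {ρ : ℝ} (hρ : ρ ∈ Set.Icc (0 : ℝ) 1) : IsBernoulli ρ (prodBer ρ) := by
  intro s f
  have : {η : Config | ∀ x ∈ s, η x = f x} = Set.pi (s : Set Site) (fun x => {f x}) := by
    ext η
    simp [Set.mem_pi]
  rw [this, prodBer, Measure.infinitePi_pi _ (fun i _ => measurableSet_singleton _)]
  exact Finset.prod_congr rfl fun x _ => ber_apply hρ (f x)

lemma prodBer_eq_map (ρ : ℝ) : prodBer ρ = unif.map (fun ω x => thr ρ (ω x)) := by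
  rw [unif, Measure.infinitePi_map_pi _ (fun _ => meas_thr ρ)]
  rfl

lemma prodBer_mono {ρ ρ' : ℝ} (h : ρ ≤ ρ') (u v : Site) :
    prodBer ρ (gev u v) ≤ prodBer ρ' (gev u v) := by
  have hm : ∀ r, Measurable (fun (ω : Site → unitInterval) x => thr r (ω x)) := fun r =>
    measurable_pi_lambda _ fun x => (meas_thr r).comp (measurable_pi_apply x)
  rw [prodBer_eq_map, prodBer_eq_map, Measure.map_apply (hm _) (meas_gev u v),
    Measure.map_apply (hm _) (meas_gev u v)]
  refine measure_mono fun ω hω => ?_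
  have hthr : ∀ t, thr ρ t = true → thr ρ' t = true := by
    intro t ht
    simp only [thr, decide_eq_true_eq] at *
    exact ht.trans h
  refine ⟨hthr _ hω.1, hω.2.mono fun y hy => ?_⟩
  exact Relation.ReflTransGen.mono (r := gstep u v (fun x => thr ρ (ω x)))
    (p := gstep u v (fun x => thr ρ' (ω x))) (fun a b hab => ⟨hab.1, hthr _ hab.2⟩) _ _ hy

/-! ### Lattice symmetry -/

lemma gcl_lift (u v u' v' : Site) (φ : Site ≃+ Site) (hu : φ u = u') (hv : φ v = v')
    (η : Config) : gcl u v (fun x => η (φ x)) = φ ⁻¹' gcl u' v' η := by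
  ext y
  constructor
  · intro h
    have := Relation.ReflTransGen.lift (r := gstep u v (fun x => η (φ x)))
      (p := gstep u' v' η) φ (fun a b hab => by
      obtain ⟨h1, h2⟩ := hab
      refine ⟨?_, h2⟩
      rcases h1 with rfl | rfl
      · left; rw [map_add, hu]
      · right; rw [map_add, hv]) _ _ h
    rw [Function.onFun, map_zero] at this
    exact this
  · intro h
    have := Relation.ReflTransGen.lift (r := gstep u' v' η)
      (p := gstep u v (fun x => η (φ x))) φ.symm
      (fun a b hab => by
      obtain ⟨h1, h2⟩ := hab
      refine ⟨?_, by simpa using h2⟩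
      rcases h1 with rfl | rfl
      · left; rw [map_add, ← hu]; simp
      · right; rw [map_add, ← hv]; simp) _ _ h
    rw [Function.onFun, map_zero, AddEquiv.symm_apply_apply] at this
    exact this

lemma prodBer_sym {ρ : ℝ} (hρ : ρ ∈ Set.Icc (0 : ℝ) 1) (u v u' v' : Site)
    (φ : Site ≃+ Site) (hu : φ u = u') (hv : φ v = v') :
    prodBer ρ (gev u' v') = prodBer ρ (gev u v) := by
  have hm : Measurable (fun (η : Config) x => η (φ x)) :=
    measurable_pi_lambda _ fun x => measurable_pi_apply _
  have hp : IsProbabilityMeasure ((prodBer ρ).map (fun (η : Config) x => η (φ x))) :=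
    Measure.isProbabilityMeasure_map hm.aemeasurable
  have hb : IsBernoulli ρ ((prodBer ρ).map (fun (η : Config) x => η (φ x))) := by
    intro s f
    have hms : MeasurableSet {η : Config | ∀ x ∈ s, η x = f x} := by
      have : {η : Config | ∀ x ∈ s, η x = f x} =
          ⋂ x ∈ s, (fun η : Config => η x) ⁻¹' {f x} := by
        ext η
        simp
      rw [this]
      exact Finset.measurableSet_biInter s fun x _ =>
        (measurable_pi_apply x) (measurableSet_singleton _)
    rw [Measure.map_apply hm hms]
    have h2 := prodBer_bern hρ (s.map φ.toEquiv.toEmbedding) (fun x => f (φ.symm x))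
    rw [Finset.prod_map] at h2
    convert h2 using 2
    · ext η
      constructor
      · intro h x hx
        obtain ⟨z, hz, rfl⟩ := Finset.mem_map.1 hx
        have := h z hz
        simpa using this
      · intro h x hx
        have := h (φ x) (Finset.mem_map.2 ⟨x, hx, rfl⟩)
        simpa using this
    · simp
  have he := bern_unique hb (prodBer_bern hρ)
  conv_rhs => rw [← he]
  rw [Measure.map_apply hm (meas_gev u v)]
  congr 1
  ext η
  simp only [gev, Set.mem_ofPred_eq, Set.mem_preimage, map_zero, gcl_lift u v u' v' φ hu hv]
  refine and_congr_right fun _ => ?_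
  have : (φ ⁻¹' gcl u' v' η) = φ.symm '' gcl u' v' η := by
    ext y
    constructor
    · intro h
      exact ⟨φ y, h, by simp⟩
    · rintro ⟨z, hz, rfl⟩
      simpa using hz
  rw [this, Set.infinite_image_iff φ.symm.injective.injOn]

/-- `(a, b) ↦ (b, a + b)`. -/
def phiNE : Site ≃+ Site where
  toFun p := (p.2, p.1 + p.2)
  invFun p := (p.2 - p.1, p.1)
  left_inv p := by simp
  right_inv p := by simp
  map_add' p q := by
    ext
    · simp
    · simp only [Prod.fst_add, Prod.snd_add, Prod.mk_add_mk]; ring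

/-! ### Independence of half planes -/

lemma prodBer_half (ρ : ℝ) :
    prodBer ρ (gev e2 (e1 + e2)) * prodBer ρ (gev (-e2) (-(e1 + e2))) ≤
      prodBer ρ (gev e2 (e1 + e2) ∩ gev (-e2) (-(e1 + e2))) := by
  have hi : iIndep (fun x : Site => MeasurableSpace.comap (fun η : Config => η x) inferInstance)
      (prodBer ρ) :=
    iIndepFun.iIndep (iIndepFun_infinitePi (P := fun _ : Site => ber ρ)
      (X := fun _ b => b) (fun _ => measurable_id))
  have hd : Disjoint {x : Site | 0 ≤ x.2} {x : Site | x.2 < 0} := by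
    rw [Set.disjoint_left]
    intro x hx hx'
    simp only [Set.mem_ofPred_eq] at *
    omega
  have hind := indep_iSup_of_disjoint (fun x => (measurable_pi_apply x).comap_le) hi hd
  have hsite : ∀ (S : Set Site) (x : Site), x ∈ S →
      MeasurableSet[⨆ x ∈ S, MeasurableSpace.comap (fun η : Config => η x) inferInstance]
        {η : Config | η x = true} := by
    intro S x hx
    have hle : MeasurableSpace.comap (fun η : Config => η x) inferInstance ≤
        ⨆ x ∈ S, MeasurableSpace.comap (fun η : Config => η x) inferInstance :=
      le_iSup₂ (f := fun (x : Site) (_ : x ∈ S) =>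
        MeasurableSpace.comap (fun η : Config => η x) inferInstance) x hx
    exact hle _ ⟨{true}, measurableSet_singleton _, rfl⟩
  have hA : MeasurableSet[⨆ x ∈ {x : Site | 0 ≤ x.2},
      MeasurableSpace.comap (fun η : Config => η x) inferInstance] (gev e2 (e1 + e2)) := by
    refine MeasurableSet.inter (hsite _ 0 (by simp)) ?_
    refine meas_gcl _ e2 (e1 + e2) {x : Site | 0 ≤ x.2} (by simp [e1, e2]) ?_ (hsite _)
    intro a ha
    simp only [Set.mem_ofPred_eq, e1, e2, Prod.snd_add] at *
    omega
  have hB : MeasurableSet[⨆ x ∈ {x : Site | x.2 < 0},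
      MeasurableSpace.comap (fun η : Config => η x) inferInstance]
      {η | (gcl (-e2) (-(e1 + e2)) η).Infinite} := by
    refine meas_gcl _ _ _ {x : Site | x.2 < 0} (by simp [e1, e2]) ?_ (hsite _)
    intro a ha
    simp only [Set.mem_ofPred_eq, e1, e2, Prod.snd_add, Prod.snd_neg] at *
    omega
  have hmul := (Indep_iff _ _ _).1 hind _ _ hA hB
  calc _ ≤ prodBer ρ (gev e2 (e1 + e2)) *
        prodBer ρ {η | (gcl (-e2) (-(e1 + e2)) η).Infinite} := by
        gcongr
        exact fun η h => h.2
    _ = _ := hmul.symm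
    _ ≤ prodBer ρ (gev e2 (e1 + e2) ∩ gev (-e2) (-(e1 + e2))) :=
        measure_mono fun η h => ⟨h.1, h.1.1, h.2⟩

lemma prodBer_sq {ρ : ℝ} (hρ : ρ ∈ Set.Icc (0 : ℝ) 1) :
    prodBer ρ (gev e1 e2) ^ 2 ≤
      prodBer ρ (gev e2 (e1 + e2) ∩ gev (-e2) (-(e1 + e2))) := by
  have h1 := prodBer_sym hρ e1 e2 e2 (e1 + e2) phiNE
    (by simp [phiNE, e1, e2]) (by simp [phiNE, e1, e2])
  have h2 := prodBer_sym hρ e2 (e1 + e2) (-e2) (-(e1 + e2)) (AddEquiv.neg Site) (by simp)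
    (by simp)
  have h := prodBer_half ρ
  rw [h2, h1] at h
  rwa [sq]

/-! ### Deterministic part -/

lemma T_keep (S : Set Site) (η : Config)
    (hNE : ∀ x ∈ S, x + e2 ∈ S ∨ x + e1 + e2 ∈ S)
    (hSW : ∀ x ∈ S, x - e2 ∈ S ∨ x - e1 - e2 ∈ S)
    (h : ∀ x ∈ S, η x = true) (t : ℕ) : ∀ x ∈ S, (T^[t] η) x = true := by
  induction t with
  | zero => exact h
  | succ t ih =>
    intro x hx
    rw [Function.iterate_succ_apply']
    have : ¬ constraintA (T^[t] η) x := by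
      rintro ⟨⟨h1, h2⟩ | ⟨h1, h2⟩, -⟩
      · rcases hNE x hx with h' | h'
        · exact absurd (ih _ h') (by rw [h1]; decide)
        · exact absurd (ih _ h') (by rw [h2]; decide)
      · rcases hSW x hx with h' | h'
        · exact absurd (ih _ h') (by rw [h1]; decide)
        · exact absurd (ih _ h') (by rw [h2]; decide)
    simp [T, ih x hx, this]

lemma NE_next (η : Config) (x : Site) (h : (clusterNE η x).Infinite) :
    (clusterNE η (x + e2)).Infinite ∨ (clusterNE η (x + e1 + e2)).Infinite := by
  by_contra hc
  simp only [not_or, Set.not_infinite] at hc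
  refine h (((Set.finite_singleton x).union (hc.1.union hc.2)).subset ?_)
  rintro y ⟨-, hy⟩
  rcases Relation.ReflTransGen.cases_head hy with rfl | ⟨z, ⟨hz, hzo⟩, hzy⟩
  · left; rfl
  · right
    rcases hz with rfl | rfl
    · left; exact ⟨hzo, hzy⟩
    · right; exact ⟨hzo, hzy⟩

lemma SW_next (η : Config) (x : Site) (h : (clusterSW η x).Infinite) :
    (clusterSW η (x - e2)).Infinite ∨ (clusterSW η (x - e1 - e2)).Infinite := by
  by_contra hc
  simp only [not_or, Set.not_infinite] at hc
  refine h (((Set.finite_singleton x).union (hc.1.union hc.2)).subset ?_)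
  rintro y ⟨-, hy⟩
  rcases Relation.ReflTransGen.cases_head hy with rfl | ⟨z, ⟨hz, hzo⟩, hzy⟩
  · left; rfl
  · right
    rcases hz with rfl | rfl
    · left; exact ⟨hzo, hzy⟩
    · right; exact ⟨hzo, hzy⟩

lemma NE_occ (η : Config) (x : Site) (h : (clusterNE η x).Infinite) : η x = true := by
  obtain ⟨y, hy⟩ := h.nonempty
  exact hy.1

lemma SW_occ (η : Config) (x : Site) (h : (clusterSW η x).Infinite) : η x = true := by
  obtain ⟨y, hy⟩ := h.nonempty
  exact hy.1

lemma frozen_forever (η : Config) (x : Site) (h1 : (clusterNE η x).Infinite)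
    (h2 : (clusterSW η x).Infinite) (t : ℕ) : (T^[t] η) x = true := by
  refine T_keep {x | (clusterNE η x).Infinite ∧ (clusterSW η x).Infinite} η ?_ ?_
    (fun x hx => NE_occ η x hx.1) t x ⟨h1, h2⟩
  · rintro x ⟨hN, hS⟩
    have hx := NE_occ η x hN
    rcases NE_next η x hN with h | h
    · refine Or.inl ⟨h, hS.mono fun y hy => ⟨NE_occ _ _ h, Relation.ReflTransGen.head ?_ hy.2⟩⟩
      exact ⟨Or.inl (by abel), hx⟩
    · refine Or.inr ⟨h, hS.mono fun y hy => ⟨NE_occ _ _ h, Relation.ReflTransGen.head ?_ hy.2⟩⟩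
      exact ⟨Or.inr (by abel), hx⟩
  · rintro x ⟨hN, hS⟩
    have hx := NE_occ η x hN
    rcases SW_next η x hS with h | h
    · refine Or.inl ⟨hN.mono fun y hy => ⟨SW_occ _ _ h, Relation.ReflTransGen.head ?_ hy.2⟩, h⟩
      exact ⟨Or.inl (by abel), hx⟩
    · refine Or.inr ⟨hN.mono fun y hy => ⟨SW_occ _ _ h, Relation.ReflTransGen.head ?_ hy.2⟩, h⟩
      exact ⟨Or.inr (by abel), hx⟩

lemma one_pos' : 0 < prodBer 1 (gev e1 e2) := by
  have hae : ∀ᵐ η ∂(prodBer 1), ∀ x : Site, η x = true := by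
    rw [ae_all_iff]
    intro x
    have h := prodBer_bern (ρ := 1) (by simp) {x} (fun _ => false)
    rw [ae_iff]
    simpa using h
  have hsub : ∀ᵐ η ∂(prodBer 1), η ∈ gev e1 e2 := by
    filter_upwards [hae] with η hη
    refine ⟨hη 0, ?_⟩
    refine Set.infinite_of_injective_forall_mem (f := fun n : ℕ => ((n : ℤ), (0 : ℤ))) ?_ ?_
    · intro a b hab
      simpa using hab
    · intro n
      induction n with
      | zero => exact Relation.ReflTransGen.refl
      | succ n ih =>
        refine Relation.ReflTransGen.tail ih ⟨Or.inl ?_, hη _⟩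
        simp [e1]
  have : prodBer 1 (gev e1 e2) = 1 := (prob_compl_eq_zero_iff (meas_gev _ _)).1 hsub
  rw [this]
  exact one_pos

theorem final_density_lower_bound_and_rhoc_le_pcOP
    (μfam : ℝ → MeasureTheory.Measure Config)
    (hprob : ∀ ρ, MeasureTheory.IsProbabilityMeasure (μfam ρ))
    (hbern : ∀ ρ ∈ Set.Icc (0 : ℝ) 1, IsBernoulli ρ (μfam ρ)) :
    (∀ ρ ∈ Set.Icc (0 : ℝ) 1,
      (⨅ t : ℕ, μfam ρ {η | (T^[t] η) (0, 0) = true}) ≥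
        μfam ρ ({η | (clusterNE η (0, 0)).Infinite} ∩ {η | (clusterSW η (0, 0)).Infinite}) ∧
      μfam ρ ({η | (clusterNE η (0, 0)).Infinite} ∩ {η | (clusterSW η (0, 0)).Infinite}) ≥
        (μfam ρ {η | (clusterOP η (0, 0)).Infinite}) ^ 2) ∧
    sSup {ρ | ρ ∈ Set.Icc (0 : ℝ) 1 ∧
        (⨅ t : ℕ, μfam ρ {η | (T^[t] η) (0, 0) = true}) = 0} ≤
      sInf {ρ | ρ ∈ Set.Icc (0 : ℝ) 1 ∧
        0 < μfam ρ {η | (clusterOP η (0, 0)).Infinite}} := by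
  have heq : ∀ ρ ∈ Set.Icc (0 : ℝ) 1, μfam ρ = prodBer ρ := fun ρ hρ =>
    haveI := hprob ρ
    bern_unique (hbern ρ hρ) (prodBer_bern hρ)
  have main : ∀ ρ ∈ Set.Icc (0 : ℝ) 1,
      (⨅ t : ℕ, μfam ρ {η | (T^[t] η) (0, 0) = true}) ≥
        μfam ρ ({η | (clusterNE η (0, 0)).Infinite} ∩ {η | (clusterSW η (0, 0)).Infinite}) ∧
      μfam ρ ({η | (clusterNE η (0, 0)).Infinite} ∩ {η | (clusterSW η (0, 0)).Infinite}) ≥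
        (μfam ρ {η | (clusterOP η (0, 0)).Infinite}) ^ 2 := by
    intro ρ hρ
    refine ⟨le_iInf fun t => measure_mono fun η h => frozen_forever η _ h.1 h.2 t, ?_⟩
    rw [heq ρ hρ, NE_eq, SW_eq, OP_eq]
    exact prodBer_sq hρ
  refine ⟨main, ?_⟩
  have hne : (1 : ℝ) ∈ {ρ | ρ ∈ Set.Icc (0 : ℝ) 1 ∧
      0 < μfam ρ {η | (clusterOP η (0, 0)).Infinite}} := by
    refine ⟨by simp, ?_⟩
    rw [heq 1 (by simp), OP_eq]
    exact one_pos'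
  refine le_csInf ⟨1, hne⟩ ?_
  rintro p ⟨hp, hpos⟩
  refine Real.sSup_le ?_ hp.1
  rintro ρ ⟨hρ, hzero⟩
  by_contra hlt
  have hle : p ≤ ρ := (not_le.1 hlt).le
  obtain ⟨h1, h2⟩ := main ρ hρ
  have h3 : (μfam ρ {η | (clusterOP η (0, 0)).Infinite}) ^ 2 ≤ 0 := by
    rw [← hzero]
    exact h2.le.trans h1.le
  have h4 : μfam ρ {η | (clusterOP η (0, 0)).Infinite} = 0 := by
    simpa using h3
  rw [heq ρ hρ, OP_eq] at h4
  rw [heq p hp, OP_eq] at hpos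
  exact absurd (hpos.trans_le (prodBer_mono hle e1 e2)) (by simp [h4])
end

section
/- Suppose the octagon 𝒪_L is entirely empty in η and the site K_L^{NW} = −(L+1)e₁ has no occupied North-East path of vertical extent L starting from it (i.e., Γ^{NE,L}_{K_L^{NW}} = ∅). Then after L² steps of the spiral model dynamics the site K_L^{NW} is empty: T^{L²}η(K_L^{NW}) = 0. -/
open scoped Classical ENNReal

/-- The octagon `𝒪_L` centered at the origin, union of the quadrangles
`Q^{NW−NE}_L` (rows `0 ≤ y ≤ L−1`, `−(L−y) ≤ x ≤ L−y−1`) and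
`Q^{SW−SE}_L` (rows `−L ≤ y ≤ −1`, `−(L+y+1) ≤ x ≤ L+y`). -/
def octagon (L : ℕ) : Set Site :=
  {p | (0 ≤ p.2 ∧ p.2 ≤ (L : ℤ) - 1 ∧ -((L : ℤ) - p.2) ≤ p.1 ∧ p.1 ≤ (L : ℤ) - p.2 - 1) ∨
       (-(L : ℤ) ≤ p.2 ∧ p.2 ≤ -1 ∧ -((L : ℤ) + p.2 + 1) ≤ p.1 ∧ p.1 ≤ (L : ℤ) + p.2)}

def KNW (L : ℕ) : Site := (-(L : ℤ) - 1, 0)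
def KNE (L : ℕ) : Site := (1, (L : ℤ))
def KSW (L : ℕ) : Site := (0, -(L : ℤ) - 1)
def KSE (L : ℕ) : Site := ((L : ℤ) + 1, -1)

/-- Emptying never re-occupies. -/
lemma T_le (η : Config) (x : Site) (h : T η x = true) : η x = true := by
  unfold T at h
  split_ifs at h with h1
  exact h1.1

lemma T_false (η : Config) (x : Site) (h : η x = false) : T η x = false := by
  cases h' : T η x
  · rfl
  · rw [T_le η x h'] at h; cases h

lemma T_iter_false (k : ℕ) : ∀ (η : Config) (x : Site), η x = false → (T^[k] η) x = false := by
  induction k with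
  | zero => intro η x h; exact h
  | succ k ih =>
    intro η x h
    rw [Function.iterate_succ_apply]
    exact ih _ _ (T_false η x h)

lemma reachNE_T (η : Config) (x y : Site) (h : reachNE (T η) x y) : reachNE η x y := by
  refine ⟨T_le _ _ h.1, ?_⟩
  exact Relation.ReflTransGen.mono (fun a b hab => ⟨hab.1, T_le _ _ hab.2⟩) _ _ h.2

/-- If no occupied site of the triangle between the key site and the octagon can be emptied,
the greedy rightmost NE path from the key site reaches every height below `L`. -/
lemma greedy (L : ℕ) (η : Config) (hO : ∀ p ∈ octagon L, η p = false)
    (hK : η (KNW L) = true)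
    (hS : ∀ a n : ℤ, 0 ≤ n → n < L → -(L : ℤ) - 1 ≤ a → a ≤ -(L : ℤ) - 1 + n →
      η (a, n) = true → ¬ constraintA η (a, n)) (n : ℕ) : (n < L) →
    ∃ i : ℤ, -(L : ℤ) - 1 ≤ i ∧ i ≤ -(L : ℤ) - 1 + n ∧ η (i, (n : ℤ)) = true ∧
      reachNE η (KNW L) (i, (n : ℤ)) ∧
      (∀ a : ℤ, i < a → a ≤ -(L : ℤ) + n + 1 → η (a, (n : ℤ)) = false) ∧
      η (i + 1, (n : ℤ) - 1) = false := by
  have oct1 : ∀ a n : ℤ, 0 ≤ n → n ≤ (L : ℤ) - 1 → -((L : ℤ) - n) ≤ a → a ≤ (L : ℤ) - n - 1 →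
      η (a, n) = false := fun a n h1 h2 h3 h4 => hO _ (Or.inl ⟨h1, h2, h3, h4⟩)
  induction n with
  | zero =>
    intro hn
    refine ⟨-(L : ℤ) - 1, le_refl _, by simp, hK, ⟨hK, Relation.ReflTransGen.refl⟩, ?_, ?_⟩
    · intro a h1 h2
      push_cast at *
      apply oct1 <;> omega
    · apply hO
      right
      push_cast
      refine ⟨?_, ?_, ?_, ?_⟩ <;> (try dsimp only) <;> omega
  | succ n ih =>
    intro hn
    obtain ⟨i, hi1, hi2, hi, hr, hright, hse⟩ := ih (by omega)
    have hstuck := hS i n (by omega) (by omega) hi1 hi2 hi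
    have hne : ¬ emptyPair η ((i, (n : ℤ)) + e2) ((i, (n : ℤ)) + e1 + e2) := by
      intro h
      apply hstuck
      refine ⟨Or.inl h, Or.inr ⟨?_, ?_⟩⟩
      · have := hright (i + 1) (by omega) (by omega)
        simpa [e1] using this
      · simpa [e1, e2] using hse
    have hrow : ∀ m : ℕ, ∀ a : ℤ, a = -(L : ℤ) + n + 2 - m → i + 1 < a →
        η (a, (n : ℤ) + 1) = false := by
      intro m
      induction m with
      | zero => intro a h1 h2; apply oct1 <;> omega
      | succ m ihm =>
        intro a h1 h2
        by_cases hm : m = 0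
        · apply oct1 <;> omega
        by_contra hocc
        have hocc : η (a, (n : ℤ) + 1) = true := by simpa using hocc
        apply hS a (n + 1) (by omega) (by omega) (by omega) (by omega) hocc
        refine ⟨Or.inr ⟨?_, ?_⟩, Or.inr ⟨?_, ?_⟩⟩
        · have := hright a (by omega) (by omega)
          simpa [e2] using this
        · have := hright (a - 1) (by omega) (by omega)
          simpa [e1, e2] using this
        · have := ihm (a + 1) (by push_cast at h1; omega) (by omega)
          simpa [e1] using this
        · have := hright (a + 1) (by omega) (by push_cast at h1; omega)
          simpa [e1, e2] using this
    have hrow' : ∀ a : ℤ, i + 1 < a → a ≤ -(L : ℤ) + n + 2 → η (a, (n : ℤ) + 1) = false := by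
      intro a h1 h2
      exact hrow (-(L : ℤ) + n + 2 - a).toNat a (by omega) h1
    push_cast
    by_cases hd : η (i + 1, (n : ℤ) + 1) = true
    · refine ⟨i + 1, by omega, by omega, hd, ⟨hr.1, hr.2.tail ⟨Or.inr (by simp [e1, e2]), hd⟩⟩,
        fun a h1 h2 => hrow' a h1 (by omega), ?_⟩
      have := hright (i + 1 + 1) (by omega) (by omega)
      simpa using this
    · have hd' : η (i + 1, (n : ℤ) + 1) = false := by simpa using hd
      have hu : η (i, (n : ℤ) + 1) = true := by
        by_contra hu
        exact hne ⟨by simpa [e2] using hu, by simpa [e1, e2] using hd'⟩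
      refine ⟨i, by omega, by omega, hu, ⟨hr.1, hr.2.tail ⟨Or.inl (by simp [e2]), hu⟩⟩, ?_, ?_⟩
      · intro a h1 h2
        rcases eq_or_ne a (i + 1) with h | h
        · rw [h]; exact hd'
        · exact hrow' a (by omega) (by omega)
      · have := hright (i + 1) (by omega) (by omega)
        simpa using this

/-- As long as the key site is occupied, some site of the triangle can be emptied. -/
lemma exists_unstuck (L : ℕ) (hL : 1 ≤ L) (η : Config) (hO : ∀ p ∈ octagon L, η p = false)
    (hΓ : ∀ y : Site, ¬ (reachNE η (KNW L) y ∧ y.2 = (KNW L).2 + L))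
    (hK : η (KNW L) = true) :
    ∃ a n : ℤ, 0 ≤ n ∧ n < L ∧ -(L : ℤ) - 1 ≤ a ∧ a ≤ -(L : ℤ) - 1 + n ∧
      η (a, n) = true ∧ constraintA η (a, n) := by
  by_contra hcon
  push Not at hcon
  obtain ⟨i, hi1, hi2, hi, hr, hright, hse⟩ := greedy L η hO hK hcon (L - 1) (by omega)
  apply hcon i ((L - 1 : ℕ) : ℤ) (by omega) (by omega) hi1 hi2 hi
  refine ⟨Or.inl ⟨?_, ?_⟩, Or.inr ⟨?_, ?_⟩⟩
  · by_contra hu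
    refine hΓ _ ⟨⟨hr.1, hr.2.tail ⟨Or.inl rfl, by simpa using hu⟩⟩, ?_⟩
    simp [e2, KNW]
    omega
  · by_contra hu
    refine hΓ _ ⟨⟨hr.1, hr.2.tail ⟨Or.inr rfl, by simpa using hu⟩⟩, ?_⟩
    simp [e1, e2, KNW]
    omega
  · have := hright (i + 1) (by omega) (by omega)
    simpa [e1] using this
  · simpa [e1, e2] using hse

/-- A box containing the triangle between the key site and the octagon. -/
def boxS (L : ℕ) : Finset Site :=
  (Finset.range L ×ˢ Finset.range L).image (fun q => (-(L : ℤ) - 1 + (q.1 : ℤ), (q.2 : ℤ)))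

lemma mem_boxS (L : ℕ) (a n : ℤ) (h0 : 0 ≤ n) (h1 : n < L) (h2 : -(L : ℤ) - 1 ≤ a)
    (h3 : a ≤ -(L : ℤ) - 1 + n) : (a, n) ∈ boxS L := by
  unfold boxS
  rw [Finset.mem_image]
  refine ⟨((a + L + 1).toNat, n.toNat), ?_, ?_⟩
  · simp only [Finset.mem_product, Finset.mem_range]
    omega
  · ext <;> dsimp only <;> omega

lemma card_boxS (L : ℕ) : (boxS L).card ≤ L * L := by
  unfold boxS
  refine Finset.card_image_le.trans ?_
  simp

lemma main_ind (L : ℕ) (hL : 1 ≤ L) (k : ℕ) : ∀ (η : Config),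
    (∀ p ∈ octagon L, η p = false) →
    (∀ y : Site, ¬ (reachNE η (KNW L) y ∧ y.2 = (KNW L).2 + L)) →
    ((boxS L).filter (fun x => η x = true)).card ≤ k → (T^[k] η) (KNW L) = false := by
  induction k with
  | zero =>
    intro η hO hΓ hc
    by_contra hK
    have hK : η (KNW L) = true := by simpa using hK
    have : KNW L ∈ (boxS L).filter (fun x => η x = true) :=
      Finset.mem_filter.2 ⟨mem_boxS L _ _ (by simp) (by omega) (by simp) (by simp), hK⟩
    have := Finset.card_pos.2 ⟨_, this⟩
    omega
  | succ k ih =>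
    intro η hO hΓ hc
    cases hK : η (KNW L) with
    | false => exact T_iter_false _ _ _ hK
    | true =>
      rw [Function.iterate_succ_apply]
      apply ih
      · exact fun p hp => T_false _ _ (hO p hp)
      · exact fun y hy => hΓ y ⟨reachNE_T _ _ _ hy.1, hy.2⟩
      · obtain ⟨a, n, h0, h1, h2, h3, ho, hA⟩ := exists_unstuck L hL η hO hΓ hK
        have hlt : ((boxS L).filter (fun x => T η x = true)).card <
            ((boxS L).filter (fun x => η x = true)).card := by
          apply Finset.card_lt_card
          rw [Finset.ssubset_iff_of_subset]
          · refine ⟨(a, n), Finset.mem_filter.2 ⟨mem_boxS L a n h0 h1 h2 h3, ho⟩, ?_⟩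
            intro hm
            have := (Finset.mem_filter.1 hm).2
            simp [T, hA] at this
          · intro x hx
            rw [Finset.mem_filter] at hx ⊢
            exact ⟨hx.1, T_le _ _ hx.2⟩
        omega

theorem key_site_emptied (L : ℕ) (hL : 1 ≤ L) (η : Config)
    (hO : ∀ p ∈ octagon L, η p = false)
    (hΓ : ∀ y : Site, ¬ (reachNE η (KNW L) y ∧ y.2 = (KNW L).2 + L)) :
    (T^[L * L] η) (KNW L) = false := by
  exact main_ind L hL (L * L) η hO hΓ ((Finset.card_filter_le _ _).trans (card_boxS L))
end
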